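/- Set w := x^8 y^5, R := 9·x^{14} y^8·(1 + w) and G := −x^7 y^4·(1 + w)² in K[x,y]. Then R and G are (5,−8)-homogeneous, R is not a monomial, and [G,R] = R². -/

import Mathlib

open MvPolynomial

noncomputable section

variable {K : Type*} [Field K] [CharZero K]

/-- The support of `P` as a set of pairs `(i,j)` of exponents of `x^i y^j`. -/
def Supp (P : MvPolynomial (Fin 2) K) : Set (ℕ × ℕ) :=
  {p | MvPolynomial.coeff (Finsupp.single 0 p.1 + Finsupp.single 1 p.2) P ≠ 0}

/-- The Jacobian bracket `[P,Q] = ∂ₓP ∂_yQ − ∂ₓQ ∂_yP`. -/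
def Jb (P Q : MvPolynomial (Fin 2) K) : MvPolynomial (Fin 2) K :=
  pderiv 0 P * pderiv 1 Q - pderiv 0 Q * pderiv 1 P

/-- The `(ρ,σ)`-degree `v_{ρ,σ}(P)` (the maximum of `ρi+σj` on the support). -/
def wdeg (ρ σ : ℤ) (P : MvPolynomial (Fin 2) K) : ℤ :=
  sSup {d : ℤ | ∃ p ∈ Supp P, d = ρ * (p.1 : ℤ) + σ * (p.2 : ℤ)}

/-- The support of the `(ρ,σ)`-leading form of `P`. -/
def LeadSupp (ρ σ : ℤ) (P : MvPolynomial (Fin 2) K) : Set (ℕ × ℕ) :=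
  {p | p ∈ Supp P ∧ ρ * (p.1 : ℤ) + σ * (p.2 : ℤ) = wdeg ρ σ P}

/-- `P` is `(ρ,σ)`-homogeneous. -/
def IsHomog (ρ σ : ℤ) (P : MvPolynomial (Fin 2) K) : Prop :=
  ∀ p ∈ Supp P, ∀ q ∈ Supp P,
    ρ * (p.1 : ℤ) + σ * (p.2 : ℤ) = ρ * (q.1 : ℤ) + σ * (q.2 : ℤ)

/-- `P` is a monomial: its support has at most one point. -/
def IsMonomial (P : MvPolynomial (Fin 2) K) : Prop := (Supp P).Subsingleton

/-- `e` is the point `en_{ρ,σ}(P)`: the point of the support of the leading form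
with largest second coordinate. -/
def IsEn (ρ σ : ℤ) (P : MvPolynomial (Fin 2) K) (e : ℕ × ℕ) : Prop :=
  e ∈ LeadSupp ρ σ P ∧ ∀ q ∈ LeadSupp ρ σ P, q.2 ≤ e.2

/-- `e` is the point `st_{ρ,σ}(P)`: the point of the support of the leading form
with smallest second coordinate. -/
def IsSt (ρ σ : ℤ) (P : MvPolynomial (Fin 2) K) (e : ℕ × ℕ) : Prop :=
  e ∈ LeadSupp ρ σ P ∧ ∀ q ∈ LeadSupp ρ σ P, e.2 ≤ q.2

/-! Put `u = x⁷y⁴`; then `G` and `R` are monomials in `u` and `1 + w`, up to constants. The bracket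
of `p ^ a * q ^ b` and `p ^ c * q ^ d` is the bracket of `p` and `q` multiplied by the determinant
`a * d - b * c` and by a monomial in `p` and `q`. For `p = x`, `q = y` this gives `[u, w] = 3u²`,
where `3 = 7 * 5 - 4 * 8`; for `p = u`, `q = 1 + w` it gives
`[u(1 + w)², u²(1 + w)] = -3u²(1 + w)²[u, w]`. Hence `[G, R] = R²` with the constant `9 = 3 * 3`
in `R`. The polynomials are homogeneous because `w` has weight `5 * 8 - 8 * 5 = 0`. -/

theorem C_mul_X_pow_mul_X_pow_eq_monomial {R ι : Type*} [CommSemiring R] (c : R) (i j : ι)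
    (a b : ℕ) :
    C c * X i ^ a * X j ^ b = monomial (Finsupp.single i a + Finsupp.single j b) c := by
  simp only [X_pow_eq_monomial, C_mul_monomial, monomial_mul, mul_one]

theorem isWeightedHomogeneous_X_pow_mul_X_pow (R : Type*) {M ι : Type*} [CommSemiring R]
    [AddCommMonoid M] (ω : ι → M) (i j : ι) (a b : ℕ) :
    IsWeightedHomogeneous ω (X i ^ a * X j ^ b : MvPolynomial ι R) (a • ω i + b • ω j) :=
  ((isWeightedHomogeneous_X R ω i).pow a).mul ((isWeightedHomogeneous_X R ω j).pow b)

section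

variable {F : Type*} [Field F]

theorem mem_Supp_iff_coeff_ne_zero {P : MvPolynomial (Fin 2) F} {s : Fin 2 →₀ ℕ} :
    (s 0, s 1) ∈ Supp P ↔ coeff s P ≠ 0 := by
  have hs : Finsupp.single 0 (s 0) + Finsupp.single 1 (s 1) = s := by
    simpa only [Fin.sum_univ_two] using s.univ_sum_single
  simp only [Supp, Set.mem_ofPred_eq, hs]

theorem isHomog_of_isWeightedHomogeneous {ρ σ d : ℤ} {P : MvPolynomial (Fin 2) F}
    (hP : IsWeightedHomogeneous ![ρ, σ] P d) : IsHomog ρ σ P := by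
  have weight_eq : ∀ p ∈ Supp P, ρ * (p.1 : ℤ) + σ * (p.2 : ℤ) = d := fun p hp ↦ by
    simpa [Finsupp.weight_single, mul_comm] using hP hp
  exact fun p hp q hq ↦ (weight_eq p hp).trans (weight_eq q hq).symm

theorem not_isMonomial_monomial_add_monomial {s t : Fin 2 →₀ ℕ} (hst : s ≠ t) {a b : F}
    (ha : a ≠ 0) (hb : b ≠ 0) : ¬ IsMonomial (monomial s a + monomial t b) := by
  intro h
  have hs : (s 0, s 1) ∈ Supp (monomial s a + monomial t b) :=
    mem_Supp_iff_coeff_ne_zero.mpr (by simpa [coeff_monomial, hst.symm] using ha)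
  have ht : (t 0, t 1) ∈ Supp (monomial s a + monomial t b) :=
    mem_Supp_iff_coeff_ne_zero.mpr (by simpa [coeff_monomial, hst] using hb)
  obtain ⟨h₀, h₁⟩ := Prod.mk.inj (h hs ht)
  exact hst (Finsupp.ext (Fin.forall_fin_two.mpr ⟨h₀, h₁⟩))

theorem Jb_X_zero_X_one : Jb (X 0) (X 1 : MvPolynomial (Fin 2) F) = 1 := by
  simp [Jb, pderiv_X]

theorem Jb_neg_left (P Q : MvPolynomial (Fin 2) F) : Jb (-P) Q = -Jb P Q := by
  simp only [Jb, map_neg]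
  ring

theorem Jb_C_mul_right (c : F) (P Q : MvPolynomial (Fin 2) F) :
    Jb P (C c * Q) = C c * Jb P Q := by
  simp only [Jb, pderiv_C_mul]
  ring

theorem Jb_one_add_right (P Q : MvPolynomial (Fin 2) F) : Jb P (1 + Q) = Jb P Q := by
  simp [Jb]

theorem Jb_pow_succ_mul_pow_succ (P Q : MvPolynomial (Fin 2) F) (a b c d : ℕ) :
    Jb (P ^ (a + 1) * Q ^ (b + 1)) (P ^ (c + 1) * Q ^ (d + 1)) =
      ((a + 1) * (d + 1) - (b + 1) * (c + 1)) * P ^ (a + c + 1) * Q ^ (b + d + 1) * Jb P Q := by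
  simp only [Jb, pderiv_mul, pderiv_pow, Nat.add_sub_cancel]
  push_cast
  ring

theorem Jb_X_pow_mul_X_pow_eq_three_mul_sq :
    Jb (X 0 ^ 7 * X 1 ^ 4) (X 0 ^ 8 * X 1 ^ 5 : MvPolynomial (Fin 2) F) =
      C 3 * (X 0 ^ 7 * X 1 ^ 4) ^ 2 := by
  rw [Jb_pow_succ_mul_pow_succ (X 0) (X 1) 6 3 7 4, Jb_X_zero_X_one, map_ofNat C 3]
  push_cast
  ring

theorem Jb_mul_sq_sq_mul (P Q : MvPolynomial (Fin 2) F) :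
    Jb (P * Q ^ 2) (P ^ 2 * Q) = -3 * P ^ 2 * Q ^ 2 * Jb P Q := by
  have h := Jb_pow_succ_mul_pow_succ P Q 0 1 1 0
  simp only [zero_add, add_zero, pow_one, one_add_one_eq_two, Nat.cast_zero, Nat.cast_one] at h
  rw [h]
  ring

theorem Jb_neg_mul_sq_eq_sq {u w : MvPolynomial (Fin 2) F} {c : F} (h : Jb u w = C c * u ^ 2) :
    Jb (-(u * (1 + w) ^ 2)) (C (3 * c) * (u ^ 2 * (1 + w))) =
      (C (3 * c) * (u ^ 2 * (1 + w))) ^ 2 := by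
  rw [Jb_neg_left, Jb_C_mul_right, Jb_mul_sq_sq_mul, Jb_one_add_right, h, C_mul, map_ofNat C 3]
  ring

end

theorem stmt11_general (K : Type*) [Field K] (h3 : (3 : K) ≠ 0) :
    let w : MvPolynomial (Fin 2) K := X 0 ^ 8 * X 1 ^ 5
    let R : MvPolynomial (Fin 2) K := 9 * X 0 ^ 14 * X 1 ^ 8 * (1 + w)
    let G : MvPolynomial (Fin 2) K := -(X 0 ^ 7 * X 1 ^ 4 * (1 + w) ^ 2)
    IsHomog 5 (-8) R ∧ IsHomog 5 (-8) G ∧ ¬ IsMonomial R ∧ Jb G R = R ^ 2 := by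
  intro w R G
  let u : MvPolynomial (Fin 2) K := X 0 ^ 7 * X 1 ^ 4
  have hC : (C (3 * 3) : MvPolynomial (Fin 2) K) = 9 := by rw [C_mul, map_ofNat C 3]; norm_num
  have hR : R = C (3 * 3) * (u ^ 2 * (1 + w)) := by rw [hC]; ring
  have hR_sum : R = C (3 * 3) * X 0 ^ 14 * X 1 ^ 8 + C (3 * 3) * X 0 ^ 22 * X 1 ^ 13 := by
    rw [hC]; ring
  have u_homog : IsWeightedHomogeneous ![(5 : ℤ), -8] u 3 :=
    isWeightedHomogeneous_X_pow_mul_X_pow K _ 0 1 7 4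
  have one_add_w_homog : IsWeightedHomogeneous ![(5 : ℤ), -8] (1 + w) 0 :=
    (isWeightedHomogeneous_one K _).add (isWeightedHomogeneous_X_pow_mul_X_pow K _ 0 1 8 5)
  refine ⟨?_, ?_, ?_, ?_⟩
  · rw [hR]
    exact isHomog_of_isWeightedHomogeneous (((u_homog.pow 2).mul one_add_w_homog).C_mul _)
  · exact isHomog_of_isWeightedHomogeneous (u_homog.mul (one_add_w_homog.pow 2)).neg
  · rw [hR_sum, C_mul_X_pow_mul_X_pow_eq_monomial, C_mul_X_pow_mul_X_pow_eq_monomial]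
    have hc : (3 * 3 : K) ≠ 0 := mul_ne_zero h3 h3
    exact not_isMonomial_monomial_add_monomial (fun h ↦ by simpa using DFunLike.congr_fun h 0) hc hc
  · rw [hR]
    exact Jb_neg_mul_sq_eq_sq Jb_X_pow_mul_X_pow_eq_three_mul_sq

/-- With `w = x⁸y⁵`, `R = 9x¹⁴y⁸(1+w)` and `G = −x⁷y⁴(1+w)²`, the polynomials
`R` and `G` are `(5,−8)`-homogeneous, `R` is not a monomial, and `[G,R]=R²`. -/
theorem stmt11 (K : Type*) [Field K] [CharZero K] :
    let w : MvPolynomial (Fin 2) K := MvPolynomial.X 0 ^ 8 * MvPolynomial.X 1 ^ 5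
    let R : MvPolynomial (Fin 2) K :=
      (9 : MvPolynomial (Fin 2) K) * MvPolynomial.X 0 ^ 14 * MvPolynomial.X 1 ^ 8 * (1 + w)
    let G : MvPolynomial (Fin 2) K :=
      - (MvPolynomial.X 0 ^ 7 * MvPolynomial.X 1 ^ 4 * (1 + w) ^ 2)
    IsHomog 5 (-8) R ∧ IsHomog 5 (-8) G ∧ ¬ IsMonomial R ∧ Jb G R = R ^ 2 :=
  stmt11_general K three_ne_zero

end
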